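/- arXiv:2404.11362 — 2 statements merged into one kernel-verified Lean document; each statement's English description precedes it below -/
import Mathlib

section
/- Let N ≥ 1, let f : ℝ → ℝ be continuous, and set F(s) = ∫₀^s f(t) dt. Let u : ℝ^N → ℝ be continuously differentiable and let ψ : ℝ^N → ℝ be continuously differentiable with compact support. Then ∫_{ℝ^N} f(u(x)) ∂₁(ψ u)(x) dx = ∫_{ℝ^N} ∂₁ψ(x) ( f(u(x)) u(x) − F(u(x)) ) dx, where ∂₁ denotes the partial derivative in the first coordinate direction. -/
open MeasureTheory Filter Set Real

noncomputable section

/-- The primitive `F(s) = ∫₀ˢ f(t) dt`. -/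
def primF (f : ℝ → ℝ) (s : ℝ) : ℝ := ∫ t in (0:ℝ)..s, f t

/-- The partial derivative in the first coordinate direction on `ℝ^N` (`N ≥ 1`). -/
def pd1 (N : ℕ) (hN : 1 ≤ N) (g : EuclideanSpace ℝ (Fin N) → ℝ)
    (x : EuclideanSpace ℝ (Fin N)) : ℝ :=
  fderiv ℝ g x (EuclideanSpace.single (⟨0, hN⟩ : Fin N) (1 : ℝ))

/-- **Integration-by-parts identity for the nonlinear term (Proposition 3.3).**
Testing `f(u)` against `∂₁(ψu)` leaves only a term involving `∂₁ψ`: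
`∫ f(u) ∂₁(ψu) = ∫ ∂₁ψ (f(u)u − F(u))`. -/
theorem ibp_nonlinear_term (N : ℕ) (hN : 1 ≤ N)
    (f : ℝ → ℝ) (hf_cont : Continuous f)
    (u : EuclideanSpace ℝ (Fin N) → ℝ) (hu : ContDiff ℝ 1 u)
    (ψ : EuclideanSpace ℝ (Fin N) → ℝ) (hψ : ContDiff ℝ 1 ψ)
    (hψ_supp : HasCompactSupport ψ) :
    ∫ x, f (u x) * pd1 N hN (fun y => ψ y * u y) x
      = ∫ x, pd1 N hN ψ x * (f (u x) * u x - primF f (u x)) := by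
  set v : EuclideanSpace ℝ (Fin N) := EuclideanSpace.single (⟨0, hN⟩ : Fin N) (1 : ℝ) with hv
  have hF : ∀ s, HasDerivAt (primF f) (f s) s := fun s =>
    intervalIntegral.integral_hasDerivAt_right (hf_cont.intervalIntegrable _ _)
      hf_cont.aestronglyMeasurable.stronglyMeasurableAtFilter hf_cont.continuousAt
  have hFc : Continuous (primF f) :=
    continuous_iff_continuousAt.2 fun s => (hF s).continuousAt
  have hud : Differentiable ℝ u := hu.differentiable one_ne_zero
  have hψd : Differentiable ℝ ψ := hψ.differentiable one_ne_zero
  have huc := hu.continuous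
  have hψc := hψ.continuous
  have hFu : ∀ x, HasFDerivAt (fun y => primF f (u y)) (f (u x) • fderiv ℝ u x) x := fun x =>
    (hF (u x)).comp_hasFDerivAt x (hud x).hasFDerivAt
  have hdu : Continuous fun x => fderiv ℝ u x v :=
    (hu.continuous_fderiv one_ne_zero).clm_apply continuous_const
  have hdψ : Continuous fun x => fderiv ℝ ψ x v :=
    (hψ.continuous_fderiv one_ne_zero).clm_apply continuous_const
  have hsψ : HasCompactSupport fun x => fderiv ℝ ψ x v := hψ_supp.fderiv_apply ℝ v
  have hfu : ∀ x, fderiv ℝ (fun y => primF f (u y)) x v = f (u x) * fderiv ℝ u x v := fun x => by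
    rw [(hFu x).fderiv]; simp
  have i1 : Integrable (fun x => fderiv ℝ ψ x v * primF f (u x)) :=
    Continuous.integrable_of_hasCompactSupport (hdψ.mul (hFc.comp huc)) hsψ.mul_right
  have i2 : Integrable (fun x => ψ x * (f (u x) * fderiv ℝ u x v)) :=
    Continuous.integrable_of_hasCompactSupport (hψc.mul ((hf_cont.comp huc).mul hdu))
      hψ_supp.mul_right
  have i3 : Integrable (fun x => ψ x * primF f (u x)) :=
    Continuous.integrable_of_hasCompactSupport (hψc.mul (hFc.comp huc)) hψ_supp.mul_right
  have i4 : Integrable (fun x => fderiv ℝ ψ x v * (f (u x) * u x)) :=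
    Continuous.integrable_of_hasCompactSupport (hdψ.mul ((hf_cont.comp huc).mul huc))
      hsψ.mul_right
  have key := integral_mul_fderiv_eq_neg_fderiv_mul_of_integrable (μ := volume) (f := ψ)
    (g := fun y => primF f (u y)) (v := v) i1 (by simpa only [hfu] using i2) i3
    (fun x _ => hψd x) (fun x _ => (hFu x).differentiableAt)
  simp only [hfu] at key
  have e1 : ∀ x, f (u x) * pd1 N hN (fun y => ψ y * u y) x
      = ψ x * (f (u x) * fderiv ℝ u x v) + fderiv ℝ ψ x v * (f (u x) * u x) := fun x => by
    have h := ((hψd x).hasFDerivAt.mul (hud x).hasFDerivAt).fderiv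
    have h' : fderiv ℝ (fun y => ψ y * u y) x = ψ x • fderiv ℝ u x + u x • fderiv ℝ ψ x := h
    unfold pd1
    rw [h', ← hv]
    simp only [add_apply, ContinuousLinearMap.add_apply, ContinuousLinearMap.smul_apply, smul_eq_mul]
    ring
  have e2 : ∀ x, pd1 N hN ψ x * (f (u x) * u x - primF f (u x))
      = fderiv ℝ ψ x v * (f (u x) * u x) - fderiv ℝ ψ x v * primF f (u x) := fun x => by
    unfold pd1
    rw [← hv]; ring
  simp only [e1, e2]
  rw [integral_add i2 i4, integral_sub i4 i1, key]
  ring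
end
end

section
/- Let N ≥ 1, let w : ℝ^N → ℝ be twice continuously differentiable, and let ψ : ℝ^N → ℝ be twice continuously differentiable with compact support. Then ∫_{ℝ^N} (−Δw)(x) ∂₁(ψ w)(x) dx = ∫_{ℝ^N} ( (1/2) |∇w(x)|² ∂₁ψ(x) + w(x) ⟨∇w(x), ∇(∂₁ψ)(x)⟩ + ⟨∇w(x), ∇ψ(x)⟩ ∂₁w(x) ) dx, where Δ is the Laplacian and ∂₁ denotes the partial derivative in the first coordinate direction. -/
open MeasureTheory Filter Set Real
open scoped RealInnerProductSpace

noncomputable section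

/-- The Laplacian `Δg = ∑ᵢ ∂ᵢ∂ᵢ g` on `ℝ^N`. -/
def lap (N : ℕ) (g : EuclideanSpace ℝ (Fin N) → ℝ) (x : EuclideanSpace ℝ (Fin N)) : ℝ :=
  ∑ i : Fin N, fderiv ℝ (fun y => fderiv ℝ g y (EuclideanSpace.single i (1 : ℝ))) x
    (EuclideanSpace.single i (1 : ℝ))

theorem aux_int_zero {N : ℕ} (f : EuclideanSpace ℝ (Fin N) → ℝ) (hf : ContDiff ℝ 1 f)
    (hc : HasCompactSupport f) (v : EuclideanSpace ℝ (Fin N)) :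
    Integrable (fun x => fderiv ℝ f x v) ∧ ∫ x, fderiv ℝ f x v = 0 := by
  have hcont : Continuous (fun x => fderiv ℝ f x v) :=
    (hf.continuous_fderiv (by norm_num)).clm_apply continuous_const
  have hI : Integrable (fun x => fderiv ℝ f x v) :=
    hcont.integrable_of_hasCompactSupport (hc.fderiv_apply (𝕜 := ℝ) v)
  refine ⟨hI, ?_⟩
  have := integral_mul_fderiv_eq_neg_fderiv_mul_of_integrable (μ := volume) (𝕜 := ℝ)
    (f := fun _ : EuclideanSpace ℝ (Fin N) => (1 : ℝ)) (g := f) (v := v)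
    (by simp) (by simpa using hI)
    (by simpa using hf.continuous.integrable_of_hasCompactSupport hc)
    (fun x _ => by fun_prop) (fun x _ => hf.differentiable (by norm_num) x)
  simpa using this

theorem aux_grad_inner {N : ℕ} (f g : EuclideanSpace ℝ (Fin N) → ℝ)
    (x : EuclideanSpace ℝ (Fin N)) :
    ⟪gradient f x, gradient g x⟫ = ∑ i : Fin N, fderiv ℝ f x (EuclideanSpace.single i (1 : ℝ)) *
      fderiv ℝ g x (EuclideanSpace.single i (1 : ℝ)) := by
  rw [← (EuclideanSpace.basisFun (Fin N) ℝ).sum_inner_mul_inner]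
  refine Finset.sum_congr rfl fun i _ => ?_
  rw [real_inner_comm (gradient g x)]
  simp only [gradient, InnerProductSpace.toDual_symm_apply, EuclideanSpace.basisFun_apply]

theorem aux_pd {N : ℕ} (f : EuclideanSpace ℝ (Fin N) → ℝ) (hf : ContDiff ℝ 2 f)
    (v : EuclideanSpace ℝ (Fin N)) : ContDiff ℝ 1 (fun y => fderiv ℝ f y v) :=
  (hf.fderiv_right (m := 1) (by norm_num)).clm_apply contDiff_const

theorem aux_symm {N : ℕ} (f : EuclideanSpace ℝ (Fin N) → ℝ) (hf : ContDiff ℝ 2 f)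
    (u v x : EuclideanSpace ℝ (Fin N)) :
    fderiv ℝ (fun y => fderiv ℝ f y u) x v = fderiv ℝ (fun y => fderiv ℝ f y v) x u := by
  have hd : DifferentiableAt ℝ (fderiv ℝ f) x :=
    (hf.fderiv_right (m := 1) (by norm_num)).differentiable (by norm_num) x
  have key : ∀ a b, fderiv ℝ (fun y => fderiv ℝ f y a) x b = fderiv ℝ (fderiv ℝ f) x b a := by
    intro a b
    rw [fderiv_clm_apply hd (differentiableAt_const a)]
    simp
  rw [key, key]
  exact (hf.contDiffAt.isSymmSndFDerivAt (by simp)) v u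

/-- **Integration-by-parts identity for the Laplacian term (Proposition 3.3).**
For `w` of class `C²` and `ψ` of class `C²` with compact support,
`∫ (−Δw) ∂₁(ψw) = ∫ ((1/2)|∇w|² ∂₁ψ + w ⟨∇w, ∇∂₁ψ⟩ + ⟨∇w, ∇ψ⟩ ∂₁w)`. -/
theorem ibp_laplacian_term (N : ℕ) (hN : 1 ≤ N)
    (w : EuclideanSpace ℝ (Fin N) → ℝ) (hw : ContDiff ℝ 2 w)
    (ψ : EuclideanSpace ℝ (Fin N) → ℝ) (hψ : ContDiff ℝ 2 ψ)
    (hψ_supp : HasCompactSupport ψ) :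
    ∫ x, (-(lap N w x)) * pd1 N hN (fun y => ψ y * w y) x
      = ∫ x, (1 / 2 * ‖gradient w x‖ ^ 2 * pd1 N hN ψ x
          + w x * ⟪gradient w x, gradient (fun y => pd1 N hN ψ y) x⟫
          + ⟪gradient w x, gradient ψ x⟫ * pd1 N hN w x) := by
  set e : Fin N → EuclideanSpace ℝ (Fin N) := fun i => EuclideanSpace.single i (1 : ℝ) with he
  set o : Fin N := ⟨0, hN⟩ with ho
  have w1 : ContDiff ℝ 1 w := hw.of_le (by norm_num)
  have p1 : ContDiff ℝ 1 ψ := hψ.of_le (by norm_num)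
  have hwi : ∀ i, ContDiff ℝ 1 (fun y => fderiv ℝ w y (e i)) := fun i => aux_pd w hw _
  have hpi : ∀ i, ContDiff ℝ 1 (fun y => fderiv ℝ ψ y (e i)) := fun i => aux_pd ψ hψ _
  have dw : ∀ x, HasFDerivAt w (fderiv ℝ w x) x := fun x =>
    (w1.differentiable (by norm_num) x).hasFDerivAt
  have dp : ∀ x, HasFDerivAt ψ (fderiv ℝ ψ x) x := fun x =>
    (p1.differentiable (by norm_num) x).hasFDerivAt
  have dwi : ∀ i x, HasFDerivAt (fun y => fderiv ℝ w y (e i)) _ x := fun i x =>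
    ((hwi i).differentiable (by norm_num) x).hasFDerivAt
  have dpi : ∀ i x, HasFDerivAt (fun y => fderiv ℝ ψ y (e i)) _ x := fun i x =>
    ((hpi i).differentiable (by norm_num) x).hasFDerivAt
  let G : EuclideanSpace ℝ (Fin N) → ℝ :=
    fun y => ψ y * fderiv ℝ w y (e o) + w y * fderiv ℝ ψ y (e o)
  have hG : ContDiff ℝ 1 G := (p1.mul (hwi o)).add (w1.mul (hpi o))
  have hGc : HasCompactSupport G :=
    (hψ_supp.mul_right).add ((hψ_supp.fderiv_apply (𝕜 := ℝ) (e o)).mul_left)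
  have dG : ∀ x, HasFDerivAt G _ x := fun x =>
    ((dp x).mul (dwi o x)).add ((dw x).mul (dpi o x))
  let A : Fin N → EuclideanSpace ℝ (Fin N) → ℝ := fun i y => fderiv ℝ w y (e i) * G y
  let B : Fin N → EuclideanSpace ℝ (Fin N) → ℝ :=
    fun i y => ψ y * (fderiv ℝ w y (e i) * fderiv ℝ w y (e i))
  have hA := fun i => aux_int_zero (A i) ((hwi i).mul hG) hGc.mul_left (e i)
  have hB := fun i => aux_int_zero (B i) (p1.mul ((hwi i).mul (hwi i))) hψ_supp.mul_right (e o)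
  have eG : ∀ x, pd1 N hN (fun y => ψ y * w y) x = G x := by
    intro x
    have := ((dp x).mul (dw x)).fderiv
    simp only [pd1]
    erw [this]
    simp [G, e, o]
  have hL : Integrable (fun x => (-(lap N w x)) * pd1 N hN (fun y => ψ y * w y) x) := by
    simp only [eG]
    refine Continuous.integrable_of_hasCompactSupport ?_ hGc.mul_left
    refine Continuous.mul (Continuous.neg ?_) hG.continuous
    unfold lap
    exact continuous_finsetSum _ fun i _ =>
      ((hwi i).continuous_fderiv (by norm_num)).clm_apply continuous_const
  have hD : Integrable (fun x => ∑ i, (fderiv ℝ (A i) x (e i) - 1 / 2 * fderiv ℝ (B i) x (e o))) :=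
    integrable_finsetSum _ fun i _ => (hA i).1.sub ((hB i).1.const_mul _)
  have hD0 : ∫ x, ∑ i, (fderiv ℝ (A i) x (e i) - 1 / 2 * fderiv ℝ (B i) x (e o)) = 0 := by
    have hi : ∀ i ∈ Finset.univ, Integrable
        (fun x => fderiv ℝ (A i) x (e i) - 1 / 2 * fderiv ℝ (B i) x (e o)) :=
      fun i _ => (hA i).1.sub ((hB i).1.const_mul _)
    rw [integral_finsetSum _ hi]
    refine Finset.sum_eq_zero fun i _ => ?_
    rw [integral_sub (hA i).1 ((hB i).1.const_mul _), integral_const_mul, (hA i).2, (hB i).2]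
    simp
  rw [← add_zero (∫ x, (-(lap N w x)) * pd1 N hN (fun y => ψ y * w y) x), ← hD0,
    ← integral_add hL hD]
  congr 1
  ext x
  rw [eG, ← real_inner_self_eq_norm_sq, aux_grad_inner, aux_grad_inner, aux_grad_inner]
  have eA : ∀ i, fderiv ℝ (A i) x (e i) = _ := fun i =>
    congrArg (fun L => L (e i)) ((dwi i x).mul (dG x)).fderiv
  have eB : ∀ i, fderiv ℝ (B i) x (e o) = _ := fun i =>
    congrArg (fun L => L (e o)) ((dp x).mul ((dwi i x).mul (dwi i x))).fderiv
  simp only [eA, eB, lap, pd1]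
  rw [← Finset.sum_neg_distrib, Finset.mul_sum, Finset.mul_sum, Finset.sum_mul, Finset.sum_mul,
    Finset.sum_mul, ← Finset.sum_add_distrib, ← Finset.sum_add_distrib, ← Finset.sum_add_distrib]
  refine Finset.sum_congr rfl fun i _ => ?_
  have hs := aux_symm w hw (e i) (e o) x
  simp only [ContinuousLinearMap.add_apply, ContinuousLinearMap.smul_apply, smul_eq_mul, hs, G, Pi.mul_apply]
  simp only [he, ho]
  ring
end
end
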